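/- arXiv:1008.1856 — 5 statements merged into one kernel-verified Lean document; each statement's English description precedes it below -/
import Mathlib

section
/- For every x ∈ U and all 1 ≤ i, j ≤ n one has ⟨e_i(x), e_j(x)⟩ = δ_{ij} and ⟨e_j(x), x⟩ = 0. In particular, for x ∈ U ∩ S^n the vectors e_1(x), …, e_n(x) form an orthonormal basis of the tangent space T_x S^n = {v ∈ ℝ^{n+1} : ⟨v, x⟩ = 0}. -/
open scoped InnerProductSpace BigOperators

noncomputable section

/-- `s_j(x) = ∑_{r=j}^n x_r²`. -/
def sfun (n j : ℕ) (x : EuclideanSpace ℝ (Fin (n + 1))) : ℝ :=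
  ∑ r : Fin (n + 1), if j ≤ (r : ℕ) then x r ^ 2 else 0

/-- The `j`-th coordinate of `x` (read as a natural-number index, `0` out of range). -/
def coordfun (n : ℕ) (x : EuclideanSpace ℝ (Fin (n + 1))) (j : ℕ) : ℝ :=
  if h : j < n + 1 then x ⟨j, h⟩ else 0

/-- The vector field `e_j(x) = √(s_j/s_{j-1}) ( −∂_{j−1} + (x_{j−1}/s_j) Σ_{r=j}^n x_r ∂_r )`. -/
def efun (n j : ℕ) (x : EuclideanSpace ℝ (Fin (n + 1))) : EuclideanSpace ℝ (Fin (n + 1)) :=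
  WithLp.toLp 2 fun r => Real.sqrt (sfun n j x / sfun n (j - 1) x) *
    (-(if (r : ℕ) = j - 1 then 1 else 0)
      + coordfun n x (j - 1) / sfun n j x * (if j ≤ (r : ℕ) then x r else 0))

/-- `U = {x ∈ ℝ^{n+1} : x_n > 0}`. -/
def Usph (n : ℕ) : Set (EuclideanSpace ℝ (Fin (n + 1))) := {x | 0 < coordfun n x n}

/-- The unit sphere `S^n ⊂ ℝ^{n+1}`. -/
def sph (n : ℕ) : Set (EuclideanSpace ℝ (Fin (n + 1))) :=
  {x | ∑ r : Fin (n + 1), x r ^ 2 = 1}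

/-!
Let `t_k = ∑_{r ≥ k} x_r ∂_r`, so that `s_k = ‖t_k‖²` and `t_k = x_k ∂_k + t_{k+1}` is an orthogonal
decomposition. Then `e_{k+1}(x)` is a unit vector of the plane spanned by `∂_k` and `t_{k+1}` that
is orthogonal to `t_k`. Let `m > k`. As `e_{m+1}(x)` lives on the coordinates `r ≥ m`, its inner
products with `x` and with `t_{k+1}` both equal the one with `t_m`, which vanishes, and it is
orthogonal to `∂_k`; hence it is orthogonal to `x` and to `e_{k+1}(x)`. The `n` orthonormal vectors
span the whole orthogonal complement of `x` by a dimension count.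
-/

section PlaneNormal

variable {E : Type*} [NormedAddCommGroup E] [InnerProductSpace ℝ E] {u t v : E}

/-- For a unit vector `u` orthogonal to `t ≠ 0`, the unit vector of the plane spanned by `u` and `t`
that is orthogonal to `a • u + t`; of the two such vectors, the one with negative `u`-component. -/
def planeNormal (u t : E) (a : ℝ) : E :=
  √(‖t‖ ^ 2 / ‖a • u + t‖ ^ 2) • (-u + (a / ‖t‖ ^ 2) • t)

lemma inner_planeNormal_eq_zero (hu : ⟪u, v⟫_ℝ = 0) (ht : ⟪t, v⟫_ℝ = 0) (a : ℝ) :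
    ⟪planeNormal u t a, v⟫_ℝ = 0 := by
  simp [planeNormal, inner_smul_left, inner_add_left, hu, ht]

lemma inner_planeNormal_smul_add (hu : ‖u‖ = 1) (ht : t ≠ 0) (hut : ⟪u, t⟫_ℝ = 0) (a : ℝ) :
    ⟪planeNormal u t a, a • u + t⟫_ℝ = 0 := by
  have htu : ⟪t, u⟫_ℝ = 0 := inner_eq_zero_symm.1 hut
  have ht' : ‖t‖ ≠ 0 := norm_ne_zero_iff.2 ht
  simp only [planeNormal, inner_smul_left, inner_smul_right, inner_add_left, inner_add_right,
    inner_neg_left, real_inner_self_eq_norm_sq, hu, hut, htu, conj_trivial]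
  field_simp
  ring

lemma norm_planeNormal (hu : ‖u‖ = 1) (ht : t ≠ 0) (hut : ⟪u, t⟫_ℝ = 0) (a : ℝ) :
    ‖planeNormal u t a‖ = 1 := by
  have ht' : ‖t‖ ≠ 0 := norm_ne_zero_iff.2 ht
  have pythagoras (b c : ℝ) : ‖b • u + c • t‖ ^ 2 = b ^ 2 + c ^ 2 * ‖t‖ ^ 2 := by
    simp [norm_add_sq_real, inner_smul_left, inner_smul_right, hut, norm_smul, hu, mul_pow]
  have hsum : ‖a • u + t‖ ^ 2 = a ^ 2 + ‖t‖ ^ 2 := by simpa using pythagoras a 1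
  have hdir : ‖-u + (a / ‖t‖ ^ 2) • t‖ ^ 2 = 1 + (a / ‖t‖ ^ 2) ^ 2 * ‖t‖ ^ 2 := by
    simpa using pythagoras (-1) (a / ‖t‖ ^ 2)
  rw [← sq_eq_sq₀ (norm_nonneg _) zero_le_one, one_pow, planeNormal, norm_smul, mul_pow,
    Real.norm_eq_abs, sq_abs, Real.sq_sqrt (by positivity), hsum, hdir]
  field_simp
  ring

end PlaneNormal

lemma span_range_eq_orthogonal_span_singleton {𝕜 E ι : Type*} [RCLike 𝕜] [NormedAddCommGroup E]
    [InnerProductSpace 𝕜 E] [Fintype ι] {v : ι → E} {x : E} (hv : LinearIndependent 𝕜 v)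
    (hx : x ≠ 0) (hvx : ∀ i, ⟪v i, x⟫_𝕜 = 0)
    (hcard : Module.finrank 𝕜 E = Fintype.card ι + 1) :
    Submodule.span 𝕜 (Set.range v) = (𝕜 ∙ x)ᗮ := by
  have : Fact (Module.finrank 𝕜 E = Fintype.card ι + 1) := ⟨hcard⟩
  have : FiniteDimensional 𝕜 E := .of_fact_finrank_eq_succ (Fintype.card ι)
  refine Submodule.eq_of_le_of_finrank_eq (Submodule.span_le.2 ?_) ?_
  · rintro _ ⟨i, rfl⟩
    exact Submodule.mem_orthogonal_singleton_iff_inner_left.2 (hvx i)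
  · rw [finrank_span_eq_card hv,
      Submodule.finrank_orthogonal_span_singleton (n := Fintype.card ι) hx]

section CoordTail

variable {𝕜 ι : Type*} [RCLike 𝕜] [Preorder ι] [DecidableLE ι]

/-- The vector `∑_{r ≥ i} x_r ∂_r`, the orthogonal projection of `x` onto the coordinates `r ≥ i`.
Over `ι = Fin (n + 1)` the squared norm of `coordTail j x` is `s_j(x)`. -/
def coordTail (i : ι) (x : EuclideanSpace 𝕜 ι) : EuclideanSpace 𝕜 ι :=
  WithLp.toLp 2 fun r => if i ≤ r then x r else 0

@[simp]
lemma coordTail_apply (i : ι) (x : EuclideanSpace 𝕜 ι) (r : ι) :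
    coordTail i x r = if i ≤ r then x r else 0 := rfl

lemma coordTail_ne_zero {i j : ι} {x : EuclideanSpace 𝕜 ι} (hij : i ≤ j) (hx : x j ≠ 0) :
    coordTail i x ≠ 0 := fun h => hx (by simpa [hij] using congr($h j))

lemma coordTail_coordTail_of_le {i j : ι} (hij : i ≤ j) (x : EuclideanSpace 𝕜 ι) :
    coordTail j (coordTail i x) = coordTail j x := by
  ext r
  by_cases hjr : j ≤ r
  · simp [hjr, hij.trans hjr]
  · simp [hjr]

lemma inner_coordTail_left [Fintype ι] (i : ι) (x y : EuclideanSpace 𝕜 ι) :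
    ⟪coordTail i x, y⟫_𝕜 = ⟪x, coordTail i y⟫_𝕜 := by
  simp only [PiLp.inner_apply, coordTail_apply]
  exact Finset.sum_congr rfl fun r _ => by split_ifs <;> simp

lemma coordTail_castSucc {n : ℕ} (k : Fin n) (x : EuclideanSpace 𝕜 (Fin (n + 1))) :
    coordTail k.castSucc x =
      x k.castSucc • EuclideanSpace.single k.castSucc 1 + coordTail k.succ x := by
  ext r
  rcases lt_trichotomy k.castSucc r with h | rfl | h
  · simp [h.le, h.ne', Fin.castSucc_lt_iff_succ_le.1 h]
  · simp
  · simp [h.not_ge, h.ne, (h.trans k.castSucc_lt_succ).not_ge]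

end CoordTail

section Frame

variable {n : ℕ} {x : EuclideanSpace ℝ (Fin (n + 1))}

lemma coordfun_val (x : EuclideanSpace ℝ (Fin (n + 1))) (r : Fin (n + 1)) :
    coordfun n x r = x r := dif_pos r.isLt

lemma mem_Usph_iff : x ∈ Usph n ↔ 0 < x (Fin.last n) := by
  rw [← coordfun_val, Fin.val_last, Usph, Set.mem_ofPred_eq]

lemma sfun_val_eq_norm_coordTail_sq (r : Fin (n + 1)) (x : EuclideanSpace ℝ (Fin (n + 1))) :
    sfun n r x = ‖coordTail r x‖ ^ 2 := by
  simp [sfun, EuclideanSpace.real_norm_sq_eq, ite_pow]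

lemma efun_succ_eq_planeNormal (k : Fin n) (x : EuclideanSpace ℝ (Fin (n + 1))) :
    efun n (k + 1) x =
      planeNormal (EuclideanSpace.single k.castSucc 1) (coordTail k.succ x) (x k.castSucc) := by
  rw [planeNormal, ← coordTail_castSucc, ← sfun_val_eq_norm_coordTail_sq,
    ← sfun_val_eq_norm_coordTail_sq, ← coordfun_val]
  ext r
  simp [efun, Fin.ext_iff, Fin.le_def, mul_add]

lemma inner_single_castSucc_coordTail_succ (k : Fin n) (x : EuclideanSpace ℝ (Fin (n + 1))) :
    ⟪EuclideanSpace.single k.castSucc 1, coordTail k.succ x⟫_ℝ = 0 := by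
  simp [EuclideanSpace.inner_single_left]

lemma norm_efun_succ (k : Fin n) (htail : coordTail k.succ x ≠ 0) : ‖efun n (k + 1) x‖ = 1 := by
  rw [efun_succ_eq_planeNormal]
  exact norm_planeNormal (by simp) htail (inner_single_castSucc_coordTail_succ k x) _

lemma inner_efun_succ_coordTail_castSucc (k : Fin n) (htail : coordTail k.succ x ≠ 0) :
    ⟪efun n (k + 1) x, coordTail k.castSucc x⟫_ℝ = 0 := by
  rw [efun_succ_eq_planeNormal, coordTail_castSucc]
  exact inner_planeNormal_smul_add (by simp) htail (inner_single_castSucc_coordTail_succ k x) _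

lemma coordTail_castSucc_efun_succ (k : Fin n) (x : EuclideanSpace ℝ (Fin (n + 1))) :
    coordTail k.castSucc (efun n (k + 1) x) = efun n (k + 1) x := by
  ext r
  rcases le_or_gt k.castSucc r with h | h
  · simp [h]
  · have hr : (r : ℕ) < k := h
    simp [efun, h.not_ge, hr.ne, hr.le.not_gt]

lemma inner_coordTail_efun_succ {i : Fin (n + 1)} {k : Fin n} (hik : i ≤ k.castSucc)
    (htail : coordTail k.succ x ≠ 0) : ⟪coordTail i x, efun n (k + 1) x⟫_ℝ = 0 := by
  rw [← coordTail_castSucc_efun_succ, ← inner_coordTail_left, coordTail_coordTail_of_le hik,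
    real_inner_comm, inner_efun_succ_coordTail_castSucc k htail]

lemma inner_efun_succ_eq_zero (k : Fin n) (htail : coordTail k.succ x ≠ 0) :
    ⟪efun n (k + 1) x, x⟫_ℝ = 0 := by
  rw [← coordTail_castSucc_efun_succ, inner_coordTail_left,
    inner_efun_succ_coordTail_castSucc k htail]

lemma inner_efun_succ_efun_succ_of_lt {k m : Fin n} (hkm : k < m) (hm : coordTail m.succ x ≠ 0) :
    ⟪efun n (k + 1) x, efun n (m + 1) x⟫_ℝ = 0 := by
  have hsingle : ⟪EuclideanSpace.single k.castSucc 1, efun n (m + 1) x⟫_ℝ = 0 := by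
    rw [← coordTail_castSucc_efun_succ]
    simp [EuclideanSpace.inner_single_left, hkm.not_ge]
  have htail : ⟪coordTail k.succ x, efun n (m + 1) x⟫_ℝ = 0 :=
    inner_coordTail_efun_succ (Fin.succ_le_castSucc_iff.2 hkm) hm
  rw [efun_succ_eq_planeNormal k]
  exact inner_planeNormal_eq_zero hsingle htail _

lemma orthonormal_efun_succ (hx : x (Fin.last n) ≠ 0) :
    Orthonormal ℝ fun k : Fin n => efun n (k + 1) x := by
  have htail (k : Fin n) : coordTail k.succ x ≠ 0 := coordTail_ne_zero (Fin.le_last _) hx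
  refine ⟨fun k => norm_efun_succ k (htail k), fun k m hkm => ?_⟩
  rcases hkm.lt_or_gt with h | h
  · exact inner_efun_succ_efun_succ_of_lt h (htail m)
  · exact inner_eq_zero_symm.1 (inner_efun_succ_efun_succ_of_lt h (htail k))

lemma span_efun_succ_eq_orthogonal (hx : x (Fin.last n) ≠ 0) :
    Submodule.span ℝ (Set.range fun k : Fin n => efun n (k + 1) x) = (ℝ ∙ x)ᗮ :=
  have hx0 : x ≠ 0 := fun h => hx (by simp [h])
  span_range_eq_orthogonal_span_singleton (orthonormal_efun_succ hx).linearIndependent hx0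
    (fun k => inner_efun_succ_eq_zero k (coordTail_ne_zero (Fin.le_last _) hx)) (by simp)

theorem statement0_general (hx : x (Fin.last n) ≠ 0) :
    (∀ i j : ℕ, 1 ≤ i → i ≤ n → 1 ≤ j → j ≤ n →
      ⟪efun n i x, efun n j x⟫_ℝ = if i = j then 1 else 0) ∧
    (∀ j : ℕ, 1 ≤ j → j ≤ n → ⟪efun n j x, x⟫_ℝ = 0) ∧
    (Submodule.span ℝ (Set.range fun j : Fin n => efun n ((j : ℕ) + 1) x) :
        Set (EuclideanSpace ℝ (Fin (n + 1)))) = {v | ⟪v, x⟫_ℝ = 0} := by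
  refine ⟨fun i j hi hin hj hjn => ?_, fun j hj hjn => ?_, ?_⟩
  · obtain ⟨i, rfl⟩ := Nat.exists_eq_add_of_le' hi
    obtain ⟨j, rfl⟩ := Nat.exists_eq_add_of_le' hj
    simpa [Fin.ext_iff] using orthonormal_iff_ite.1 (orthonormal_efun_succ hx) ⟨i, hin⟩ ⟨j, hjn⟩
  · obtain ⟨j, rfl⟩ := Nat.exists_eq_add_of_le' hj
    exact inner_efun_succ_eq_zero ⟨j, hjn⟩ (coordTail_ne_zero (Fin.le_last _) hx)
  · rw [span_efun_succ_eq_orthogonal hx]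
    ext v
    exact Submodule.mem_orthogonal_singleton_iff_inner_left

end Frame

/-- For every `x ∈ U` and all `1 ≤ i, j ≤ n` one has `⟨e_i(x), e_j(x)⟩ = δ_{ij}` and
`⟨e_j(x), x⟩ = 0`.  In particular, for `x ∈ U ∩ S^n` the vectors `e_1(x), …, e_n(x)` form an
orthonormal basis of the tangent space `T_x S^n = {v ∈ ℝ^{n+1} : ⟨v, x⟩ = 0}`. -/
theorem statement0 (n : ℕ) (hn : 1 ≤ n) (x : EuclideanSpace ℝ (Fin (n + 1)))
    (hx : x ∈ Usph n) :
    (∀ i j : ℕ, 1 ≤ i → i ≤ n → 1 ≤ j → j ≤ n →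
      ⟪efun n i x, efun n j x⟫_ℝ = if i = j then 1 else 0) ∧
    (∀ j : ℕ, 1 ≤ j → j ≤ n → ⟪efun n j x, x⟫_ℝ = 0) ∧
    (x ∈ sph n →
      (Submodule.span ℝ (Set.range fun j : Fin n => efun n ((j : ℕ) + 1) x) :
          Set (EuclideanSpace ℝ (Fin (n + 1))))
        = {v | ⟪v, x⟫_ℝ = 0}) := by
  obtain ⟨hframe, hnormal, hspan⟩ := statement0_general (mem_Usph_iff.1 hx).ne'
  exact ⟨hframe, hnormal, fun _ => hspan⟩
end
end

section
/- For all 1 ≤ k < j ≤ n and every x ∈ U ∩ S^n, the Fréchet derivative of e_j at x in direction e_k(x) vanishes: D_{e_k(x)} e_j(x) = 0. -/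
open scoped InnerProductSpace BigOperators

noncomputable section

/-!
The field `e_j` depends only on the tail `(x_{j-1}, …, x_n)` and is homogeneous of degree `0` in it.
For `k < j` the vector `e_k(x)` is, on the coordinates `k, …, n`, a multiple of `x`. Moving in
the direction `e_k(x)` therefore only rescales the tail that `e_j` sees, so `e_j` is locally
constant along the line through `x` in this direction.
-/

open Topology

lemma fderiv_apply_eq_zero_of_eventually_eq {𝕜 E F : Type*} [NontriviallyNormedField 𝕜]
    [NormedAddCommGroup E] [NormedSpace 𝕜 E] [NormedAddCommGroup F] [NormedSpace 𝕜 F]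
    {f : E → F} {x v : E} (hf : DifferentiableAt 𝕜 f x)
    (hconst : ∀ᶠ t : 𝕜 in 𝓝 0, f (x + t • v) = f x) : fderiv 𝕜 f x v = 0 := by
  have hline : (fun t : 𝕜 => f (x + t • v)) =ᶠ[𝓝 0] fun _ => f x := hconst
  rw [← hf.lineDeriv_eq_fderiv, lineDeriv, hline.deriv_eq, deriv_const]

section

variable {n j k : ℕ} {x y v : EuclideanSpace ℝ (Fin (n + 1))}

lemma sfun_congr (h : ∀ r : Fin (n + 1), j ≤ (r : ℕ) → y r = x r) : sfun n j y = sfun n j x :=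
  Finset.sum_congr rfl fun r _ => if_ctx_congr Iff.rfl (fun hr => by rw [h r hr]) fun _ => rfl

lemma sfun_smul (a : ℝ) (x : EuclideanSpace ℝ (Fin (n + 1))) :
    sfun n j (a • x) = a ^ 2 * sfun n j x := by
  simp only [sfun, PiLp.smul_apply, smul_eq_mul, mul_pow, Finset.mul_sum, mul_ite, mul_zero]

lemma sfun_antitone (x : EuclideanSpace ℝ (Fin (n + 1))) : Antitone fun j => sfun n j x := by
  intro i j hij
  refine Finset.sum_le_sum fun r _ => ?_
  split_ifs with hj hi
  exacts [le_rfl, absurd (hij.trans hj) hi, sq_nonneg _, le_rfl]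

lemma sfun_pos_of_mem_Usph (hj : j ≤ n) (hx : x ∈ Usph n) : 0 < sfun n j x := by
  have hlast : 0 < x (Fin.last n) := by simpa [Usph, coordfun, Fin.last] using hx
  refine Finset.sum_pos' (fun r _ => by split_ifs <;> positivity)
    ⟨Fin.last n, Finset.mem_univ _, ?_⟩
  rw [if_pos (by simpa using hj)]
  positivity

lemma differentiable_sfun (n j : ℕ) : Differentiable ℝ (sfun n j) := by
  refine Differentiable.fun_sum fun r _ => ?_
  split_ifs <;> fun_prop

lemma coordfun_congr {i : ℕ} (h : ∀ r : Fin (n + 1), (r : ℕ) = i → y r = x r) :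
    coordfun n y i = coordfun n x i :=
  dite_congr rfl (fun hi => h ⟨i, hi⟩ rfl) fun _ => rfl

lemma coordfun_smul (a : ℝ) (x : EuclideanSpace ℝ (Fin (n + 1))) (i : ℕ) :
    coordfun n (a • x) i = a * coordfun n x i := by
  simp only [coordfun, PiLp.smul_apply, smul_eq_mul, mul_dite, mul_zero]

lemma differentiable_coordfun (n i : ℕ) : Differentiable ℝ fun x => coordfun n x i := by
  unfold coordfun
  split_ifs <;> fun_prop

lemma efun_congr (h : ∀ r : Fin (n + 1), j - 1 ≤ (r : ℕ) → y r = x r) :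
    efun n j y = efun n j x := by
  have htail : ∀ r : Fin (n + 1), j ≤ (r : ℕ) → y r = x r :=
    fun r hr => h r ((Nat.sub_le j 1).trans hr)
  have hcoord : coordfun n y (j - 1) = coordfun n x (j - 1) := coordfun_congr fun r hr => h r hr.ge
  ext r
  simp +contextual only [efun, sfun_congr h, sfun_congr htail, hcoord, htail]

lemma efun_smul {a : ℝ} (ha : a ≠ 0) (x : EuclideanSpace ℝ (Fin (n + 1))) :
    efun n j (a • x) = efun n j x := by
  ext r
  have hcoeff : a * coordfun n x (j - 1) / (a ^ 2 * sfun n j x) * (a * x r) =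
      coordfun n x (j - 1) / sfun n j x * x r := by
    field_simp
  simp only [efun, sfun_smul, coordfun_smul, PiLp.smul_apply, smul_eq_mul,
    mul_div_mul_left _ _ (pow_ne_zero 2 ha), mul_ite, mul_zero, hcoeff]

lemma efun_apply_of_le (hk : 1 ≤ k) (x : EuclideanSpace ℝ (Fin (n + 1))) {r : Fin (n + 1)}
    (hr : k ≤ (r : ℕ)) :
    efun n k x r =
      √(sfun n k x / sfun n (k - 1) x) * (coordfun n x (k - 1) / sfun n k x) * x r := by
  have hne : (r : ℕ) ≠ k - 1 := by omega
  simp only [efun, if_neg hne, if_pos hr, neg_zero, zero_add, mul_assoc]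

lemma differentiableAt_efun (hx : 0 < sfun n j x) : DifferentiableAt ℝ (efun n j) x := by
  have hx' : 0 < sfun n (j - 1) x := hx.trans_le (sfun_antitone x (Nat.sub_le j 1))
  have hs := differentiable_sfun n j x
  have hs' := differentiable_sfun n (j - 1) x
  have hc := differentiable_coordfun n (j - 1) x
  have hsqrt : DifferentiableAt ℝ (fun y => √(sfun n j y / sfun n (j - 1) y)) x := by
    simpa only [div_eq_mul_inv] using (hs.fun_mul (hs'.fun_inv hx'.ne')).sqrt (div_pos hx hx').ne'
  have hcoeff : DifferentiableAt ℝ (fun y => coordfun n y (j - 1) / sfun n j y) x := by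
    simpa only [div_eq_mul_inv] using hc.fun_mul (hs.fun_inv hx.ne')
  refine differentiableAt_euclidean.2 fun r => hsqrt.mul ((hcoeff.mul ?_).const_add _)
  split_ifs <;> fun_prop

lemma fderiv_efun_apply_eq_zero_of_radial {c : ℝ} (hx : 0 < sfun n j x)
    (hv : ∀ r : Fin (n + 1), j - 1 ≤ (r : ℕ) → v r = c * x r) :
    fderiv ℝ (efun n j) x v = 0 := by
  refine fderiv_apply_eq_zero_of_eventually_eq (differentiableAt_efun hx) ?_
  have hcont : ContinuousAt (fun t : ℝ => 1 + t * c) 0 := by fun_prop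
  filter_upwards [hcont.eventually_ne (by simp : 1 + 0 * c ≠ 0)] with t ht
  have hscale : ∀ r : Fin (n + 1), j - 1 ≤ (r : ℕ) → (x + t • v) r = ((1 + t * c) • x) r := by
    intro r hr
    simp only [PiLp.add_apply, PiLp.smul_apply, smul_eq_mul, hv r hr]
    ring
  exact (efun_congr hscale).trans (efun_smul ht x)

theorem statement3_general (hk : 1 ≤ k) (hkj : k < j) (hx : 0 < sfun n j x) :
    fderiv ℝ (efun n j) x (efun n k x) = 0 :=
  fderiv_efun_apply_eq_zero_of_radial hx fun _ hr =>
    efun_apply_of_le hk x ((Nat.le_sub_one_of_lt hkj).trans hr)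

end

/-- For `1 ≤ k < j ≤ n` and `x ∈ U ∩ S^n`, the Fréchet derivative of `e_j` at `x` in the
direction `e_k(x)` vanishes: `D_{e_k(x)} e_j(x) = 0`. -/
theorem statement3 (n k j : ℕ) (hk : 1 ≤ k) (hkj : k < j) (hj : j ≤ n)
    (x : EuclideanSpace ℝ (Fin (n + 1))) (hxU : x ∈ Usph n) (hxS : x ∈ sph n) :
    fderiv ℝ (efun n j) x (efun n k x) = 0 :=
  statement3_general hk hkj (sfun_pos_of_mem_Usph hj hxU)
end
end

section
/- At every point p = (C, r, x̂, A) ∈ Ω with C ∈ M₃(ℝ) invertible and A ∈ M₆(ℝ) invertible, the twelve vectors Z₁(p), Z₂(p), Z₃(p), K₁(p), K₂(p), K₃(p), V₁₂(p), V₁₃(p), V₂₃(p), U₁(p), U₂(p), U₃(p) are linearly independent. (In particular, the flag D³ = D + [D, D] + [D, [D, D]] of the rolling distribution D of SE(3) over 𝔰𝔢(3) has rank 12 at every point of the 27-dimensional configuration space Q = SE(3) × ℝ⁶ × SO(6).) -/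
noncomputable section

attribute [local instance] Matrix.normedAddCommGroup Matrix.normedSpace

/-- The ambient space `M₃(ℝ) × ℝ³` in which `SE(3)` sits. -/
abbrev AmbSE := Matrix (Fin 3) (Fin 3) ℝ × EuclideanSpace ℝ (Fin 3)

/-- The ambient configuration space `Ω = (M₃(ℝ) × ℝ³) × ℝ⁶ × M₆(ℝ)`. -/
abbrev ConfSE := AmbSE × EuclideanSpace ℝ (Fin 6) × Matrix (Fin 6) (Fin 6) ℝ

/-- The elementary `3×3` matrix `E_{ij}`. -/
def E3 (i j : Fin 3) : Matrix (Fin 3) (Fin 3) ℝ := Matrix.single i j 1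

/-- The elementary `6×6` matrix `E_{ab}`. -/
def E6 (a b : Fin 6) : Matrix (Fin 6) (Fin 6) ℝ := Matrix.single a b 1

/-- `Y₁(C, r) = ((1/√2) C(E₁₂ − E₂₁), 0)`. -/
def Yse1 : AmbSE → AmbSE := fun p => ((Real.sqrt 2)⁻¹ • (p.1 * (E3 0 1 - E3 1 0)), 0)

/-- `Y₂(C, r) = ((1/√2) C(E₁₃ − E₃₁), 0)`. -/
def Yse2 : AmbSE → AmbSE := fun p => ((Real.sqrt 2)⁻¹ • (p.1 * (E3 0 2 - E3 2 0)), 0)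

/-- `Y₃(C, r) = ((1/√2) C(E₂₃ − E₃₂), 0)`. -/
def Yse3 : AmbSE → AmbSE := fun p => ((Real.sqrt 2)⁻¹ • (p.1 * (E3 1 2 - E3 2 1)), 0)

/-- `X_k(C, r) = (0, C ε_k)`. -/
def Xse (k : Fin 3) : AmbSE → AmbSE := fun p => (0, WithLp.toLp 2 (p.1.mulVec (Pi.single k 1)))

/-- `M₁ = (1/(2√2))(E₂₃ − E₃₂) + (1/√2)(E₄₅ − E₅₄)`. -/
def Mse1 : Matrix (Fin 6) (Fin 6) ℝ :=
  (2 * Real.sqrt 2)⁻¹ • (E6 1 2 - E6 2 1) + (Real.sqrt 2)⁻¹ • (E6 3 4 - E6 4 3)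

/-- `M₂ = −(1/(2√2))(E₁₃ − E₃₁) + (1/√2)(E₄₆ − E₆₄)`. -/
def Mse2 : Matrix (Fin 6) (Fin 6) ℝ :=
  -(2 * Real.sqrt 2)⁻¹ • (E6 0 2 - E6 2 0) + (Real.sqrt 2)⁻¹ • (E6 3 5 - E6 5 3)

/-- `M₃ = (1/(2√2))(E₁₂ − E₂₁) + (1/√2)(E₅₆ − E₆₅)`. -/
def Mse3 : Matrix (Fin 6) (Fin 6) ℝ :=
  (2 * Real.sqrt 2)⁻¹ • (E6 0 1 - E6 1 0) + (Real.sqrt 2)⁻¹ • (E6 4 5 - E6 5 4)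

/-- The twelve vector fields `Z₁, Z₂, Z₃, K₁, K₂, K₃, V₁₂, V₁₃, V₂₃, U₁, U₂, U₃` on
`Ω = (M₃(ℝ) × ℝ³) × ℝ⁶ × M₆(ℝ)`:
`Z_i = (Y_i, Aε_i, A M_i)`, `K_k = (X_k, Aε_{3+k}, 0)`, `V_{ab} = (0, 0, A(E_{ab} − E_{ba}))`,
`U_i = (0, Aε_i, 0)`. -/
def seFields : Fin 12 → ConfSE → ConfSE :=
  ![fun p => (Yse1 p.1, WithLp.toLp 2 (p.2.2.mulVec (Pi.single 0 1)), p.2.2 * Mse1),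
    fun p => (Yse2 p.1, WithLp.toLp 2 (p.2.2.mulVec (Pi.single 1 1)), p.2.2 * Mse2),
    fun p => (Yse3 p.1, WithLp.toLp 2 (p.2.2.mulVec (Pi.single 2 1)), p.2.2 * Mse3),
    fun p => (Xse 0 p.1, WithLp.toLp 2 (p.2.2.mulVec (Pi.single 3 1)), 0),
    fun p => (Xse 1 p.1, WithLp.toLp 2 (p.2.2.mulVec (Pi.single 4 1)), 0),
    fun p => (Xse 2 p.1, WithLp.toLp 2 (p.2.2.mulVec (Pi.single 5 1)), 0),
    fun p => (0, 0, p.2.2 * (E6 0 1 - E6 1 0)),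
    fun p => (0, 0, p.2.2 * (E6 0 2 - E6 2 0)),
    fun p => (0, 0, p.2.2 * (E6 1 2 - E6 2 1)),
    fun p => (0, WithLp.toLp 2 (p.2.2.mulVec (Pi.single 0 1)), 0),
    fun p => (0, WithLp.toLp 2 (p.2.2.mulVec (Pi.single 1 1)), 0),
    fun p => (0, WithLp.toLp 2 (p.2.2.mulVec (Pi.single 2 1)), 0)]

/-! Left translation by the invertible matrix `A` is injective on `ℝ⁶ × M₆(ℝ)` and carries a fixed
frame to the `ℝ⁶ × M₆(ℝ)`-components of the twelve fields, so it suffices that this frame is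
linearly independent. The vectors `ε_j` coming from `U` and `K` have no matrix part, so they split
off in the kernel of the projection onto `M₆(ℝ)`. Of the remaining matrices, the `V_{ab}` vanish on
the translational `3 × 3` block, on which the `M_i` restrict to nonzero multiples of distinct
standard skew matrices; and the `V_{ab}` are themselves distinct standard skew matrices. -/

section General

theorem linearIndependent_sumElim_of_map {R M N ι κ : Type*} [Ring R] [AddCommGroup M]
    [AddCommGroup N] [Module R M] [Module R N] (f : M →ₗ[R] N) {v : ι → M} {w : κ → M}
    (hv : LinearIndependent R (f ∘ v)) (hw : LinearIndependent R w) (hfw : ∀ k, f (w k) = 0) :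
    LinearIndependent R (Sum.elim v w) := by
  have hspan : Submodule.span R (Set.range w) ≤ LinearMap.ker f :=
    Submodule.span_le.2 (Set.range_subset_iff.2 hfw)
  exact (LinearIndependent.of_comp f hv).sum_type hw
    ((Submodule.range_ker_disjoint hv).mono_right hspan)

variable {n ι R : Type*} [Ring R]

/-- The standard generator `E_{ab} − E_{ba}` of the rotations of the coordinate plane `(a, b)`. -/
def skewUnit [DecidableEq n] (a b : n) : Matrix n n R :=
  Matrix.single a b 1 - Matrix.single b a 1

/-- The linear map reading off the entries of a matrix at the positions `p i`, used to detect
linear independence of matrices. -/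
def entriesAt (p : ι → n × n) : Matrix n n R →ₗ[R] ι → R :=
  LinearMap.pi fun i => Matrix.entryLinearMap R R (p i).1 (p i).2

@[simp]
theorem entriesAt_apply (p : ι → n × n) (B : Matrix n n R) (i : ι) :
    entriesAt p B i = B (p i).1 (p i).2 :=
  rfl

theorem entriesAt_skewUnit [DecidableEq ι] [Preorder n] [DecidableEq n] {p : ι → n × n}
    (hp : Function.Injective p) (hlt : ∀ i, (p i).1 < (p i).2) (i : ι) :
    entriesAt p (skewUnit (p i).1 (p i).2 : Matrix n n R) = Pi.single i 1 := by
  ext j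
  have hswap : ¬ ((p i).2 = (p j).1 ∧ (p i).1 = (p j).2) := fun h =>
    lt_asymm (hlt i) (h.1 ▸ h.2 ▸ hlt j)
  have heq : ((p i).1 = (p j).1 ∧ (p i).2 = (p j).2) ↔ j = i := by
    rw [← Prod.ext_iff, hp.eq_iff, eq_comm]
  simp only [skewUnit, entriesAt_apply, Matrix.sub_apply, Matrix.single_apply, heq, if_neg hswap,
    sub_zero, Pi.single_apply]

theorem linearIndependent_skewUnit [Preorder n] [DecidableEq n] {p : ι → n × n}
    (hp : Function.Injective p) (hlt : ∀ i, (p i).1 < (p i).2) :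
    LinearIndependent R fun i => (skewUnit (p i).1 (p i).2 : Matrix n n R) := by
  classical
  refine LinearIndependent.of_comp (entriesAt p) ?_
  simpa only [Function.comp_def, entriesAt_skewUnit hp hlt] using
    Pi.linearIndependent_single_one ι R

end General

section LeftTranslation

variable {n R : Type*} [Fintype n] [DecidableEq n] [CommRing R]

/-- Left translation by `A` on `Rⁿ × Mₙ(R)`: the linear map `(v, B) ↦ (A v, A B)`. -/
def leftTranslation (A : Matrix n n R) :
    EuclideanSpace R n × Matrix n n R →ₗ[R] EuclideanSpace R n × Matrix n n R :=
  (Matrix.toLpLin 2 2 A).prodMap (LinearMap.mulLeft R A)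

theorem leftTranslation_apply (A : Matrix n n R) (v : EuclideanSpace R n) (B : Matrix n n R) :
    leftTranslation A (v, B) = (WithLp.toLp 2 (A.mulVec v.ofLp), A * B) :=
  rfl

theorem leftTranslation_injective {A : Matrix n n R} (hA : IsUnit A) :
    Function.Injective (leftTranslation A) := by
  have hvec : Function.Injective (Matrix.toLpLin 2 2 A) := fun v w h =>
    PiLp.ext (congrFun (Matrix.mulVec_injective_of_isUnit hA (congrArg WithLp.ofLp h)))
  exact hvec.prodMap hA.mul_right_injective

end LeftTranslation

/-- The matrices `M₁, M₂, M₃`, giving the `SO(6)`-components of `Z₁, Z₂, Z₃`. -/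
def connectionMatrix : Fin 3 → Matrix (Fin 6) (Fin 6) ℝ :=
  ![Mse1, Mse2, Mse3]

/-- The coordinate planes of the rotational summand `ℝ³ × 0` of `𝔰𝔢(3) ≅ ℝ⁶`. -/
def rotationalPlane : Fin 3 → Fin 6 × Fin 6 :=
  ![(0, 1), (0, 2), (1, 2)]

/-- The coordinate planes of the translational summand `0 × ℝ³` of `𝔰𝔢(3) ≅ ℝ⁶`. -/
def translationalPlane : Fin 3 → Fin 6 × Fin 6 :=
  ![(3, 4), (3, 5), (4, 5)]

/-- The matrices `E_{ab} − E_{ba}` of the fields `V₁₂, V₁₃, V₂₃`. -/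
def rotationalSkew (i : Fin 3) : Matrix (Fin 6) (Fin 6) ℝ :=
  skewUnit (rotationalPlane i).1 (rotationalPlane i).2

theorem entriesAt_translationalPlane_connectionMatrix (i : Fin 3) :
    entriesAt translationalPlane (connectionMatrix i) = Pi.single i (Real.sqrt 2)⁻¹ := by
  ext j
  fin_cases i <;> fin_cases j <;>
    simp [translationalPlane, connectionMatrix, Mse1, Mse2, Mse3, E6]

theorem entriesAt_translationalPlane_rotationalSkew (i : Fin 3) :
    entriesAt translationalPlane (rotationalSkew i) = 0 := by
  ext j
  fin_cases i <;> fin_cases j <;>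
    simp [translationalPlane, rotationalSkew, rotationalPlane, skewUnit]

theorem linearIndependent_rotationalSkew : LinearIndependent ℝ rotationalSkew :=
  linearIndependent_skewUnit (p := rotationalPlane) (by decide) (by decide)

theorem linearIndependent_connectionMatrix_rotationalSkew :
    LinearIndependent ℝ (Sum.elim connectionMatrix rotationalSkew) := by
  have hconn : LinearIndependent ℝ (entriesAt translationalPlane ∘ connectionMatrix) := by
    simpa only [Function.comp_def, entriesAt_translationalPlane_connectionMatrix] using
      Pi.linearIndependent_single_of_ne_zero fun _ : Fin 3 =>
        inv_ne_zero (Real.sqrt_ne_zero'.2 two_pos)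
  exact linearIndependent_sumElim_of_map _ hconn linearIndependent_rotationalSkew
    entriesAt_translationalPlane_rotationalSkew

/-- The value at `A = 1` of the `ℝ⁶ × M₆(ℝ)`-components of the fields: the summands are indexed by
the `Z_i`, the `V_{ab}`, and the `U_i` together with the `K_k` (as `ε₁, …, ε₆`). -/
def rollingFrame :
    (Fin 3 ⊕ Fin 3) ⊕ Fin 6 → EuclideanSpace ℝ (Fin 6) × Matrix (Fin 6) (Fin 6) ℝ :=
  Sum.elim
    (Sum.elim (fun i => (EuclideanSpace.single (Fin.castAdd 3 i) 1, connectionMatrix i))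
      (fun i => (0, rotationalSkew i)))
    (fun j => (EuclideanSpace.single j 1, 0))

/-- The position in `rollingFrame` of each of the twelve fields, which `seFields` lists in the
order `Z, K, V, U`. -/
def frameIndex : Fin 12 → (Fin 3 ⊕ Fin 3) ⊕ Fin 6 :=
  ![.inl (.inl 0), .inl (.inl 1), .inl (.inl 2), .inr 3, .inr 4, .inr 5,
    .inl (.inr 0), .inl (.inr 1), .inl (.inr 2), .inr 0, .inr 1, .inr 2]

theorem frameIndex_injective : Function.Injective frameIndex := by
  decide

theorem linearIndependent_rollingFrame : LinearIndependent ℝ rollingFrame := by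
  refine linearIndependent_sumElim_of_map (LinearMap.snd ℝ _ _) ?_ ?_ fun _ => rfl
  · rw [Sum.comp_elim]
    exact linearIndependent_connectionMatrix_rotationalSkew
  · exact LinearIndependent.of_comp (LinearMap.fst ℝ _ _)
      (PiLp.linearIndependent_single_one 2 ℝ)

theorem seFields_snd (p : ConfSE) (i : Fin 12) :
    (seFields i p).2 = leftTranslation p.2.2 (rollingFrame (frameIndex i)) := by
  fin_cases i <;>
    simp [seFields, leftTranslation_apply, rollingFrame, frameIndex, connectionMatrix,
      rotationalSkew, rotationalPlane, skewUnit, E6]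

theorem statement12_general (p : ConfSE) (hA : IsUnit p.2.2) :
    LinearIndependent ℝ (fun i : Fin 12 => seFields i p) := by
  refine LinearIndependent.of_comp (LinearMap.snd ℝ _ _) ?_
  have hframe : LinearIndependent ℝ (rollingFrame ∘ frameIndex) :=
    linearIndependent_rollingFrame.comp _ frameIndex_injective
  have htranslate : (LinearMap.snd ℝ _ _ ∘ fun i => seFields i p) =
      leftTranslation p.2.2 ∘ rollingFrame ∘ frameIndex :=
    funext (seFields_snd p)
  rw [htranslate]
  exact hframe.map_injOn _ (leftTranslation_injective hA).injOn

/-- At every point `p = (C, r, x̂, A) ∈ Ω` with `C` and `A` invertible, the twelve vectors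
`Z₁(p), Z₂(p), Z₃(p), K₁(p), K₂(p), K₃(p), V₁₂(p), V₁₃(p), V₂₃(p), U₁(p), U₂(p), U₃(p)` are
linearly independent (so the flag `D³` of the rolling distribution of `SE(3)` over `𝔰𝔢(3)`
has rank `12` at every point of the `27`-dimensional configuration space). -/
theorem statement12 (p : ConfSE) (hC : IsUnit p.1.1) (hA : IsUnit p.2.2) :
    LinearIndependent ℝ (fun i : Fin 12 => seFields i p) :=
  statement12_general p hA
end
end

section
/- For any two vector fields V, W among the twelve fields Z₁, Z₂, Z₃, K₁, K₂, K₃, V₁₂, V₁₃, V₂₃, U₁, U₂, U₃ and every point p ∈ Ω, the Lie bracket [V, W](p) lies in the linear span of the twelve vectors Z₁(p), Z₂(p), Z₃(p), K₁(p), K₂(p), K₃(p), V₁₂(p), V₁₃(p), V₂₃(p), U₁(p), U₂(p), U₃(p). (Consequently the flag of the rolling distribution stabilizes: D⁴ = D³; the configuration space Q, of dimension 27, is foliated by 12-dimensional orbits, and the rolling of SE(3) over 𝔰𝔢(3) is not controllable.) -/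
noncomputable section

attribute [local instance] Matrix.normedAddCommGroup Matrix.normedSpace

/-- The Lie bracket `[V, W](p) = D_{V(p)}W(p) − D_{W(p)}V(p)` of vector fields on a normed
space. -/
def lieBr {F : Type*} [NormedAddCommGroup F] [NormedSpace ℝ F] (V W : F → F) (p : F) : F :=
  fderiv ℝ W p (V p) - fderiv ℝ V p (W p)

/-!
Each of the twelve fields is left invariant, `(C, r, x, A) ↦ (C S, C s, A u, A N)`, with
`N = diag(P, S)` block diagonal, `u = (a, s)`, and `P`, `S` skew. Such a field is determined by the
pair `(P, a)`, `(S, s)` of elements of `𝔰𝔢(3) = 𝔰𝔬(3) ⋉ ℝ³`, and bracketing fields amounts to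
bracketing both components. So the fields of this form make up a Lie algebra `𝔰𝔢(3) ⊕ 𝔰𝔢(3)` of
dimension twelve. The fields `U` and `V` span the first summand, `K` supplies the translations of
the second one, and `Z` its rotations, up to elements of the first; hence the twelve fields span the
whole Lie algebra.
-/

attribute [local instance] LieRing.ofAssociativeRing

section LinearFields

variable {F : Type*} [NormedAddCommGroup F] [NormedSpace ℝ F]

theorem lieBr_continuousLinearMap (L M : F →L[ℝ] F) (p : F) :
    lieBr L M p = M (L p) - L (M p) := by
  simp only [lieBr, ContinuousLinearMap.fderiv]

theorem lieBr_linearMap [FiniteDimensional ℝ F] (L M : Module.End ℝ F) (p : F) :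
    lieBr L M p = ⁅M, L⁆ p :=
  lieBr_continuousLinearMap (LinearMap.toContinuousLinearMap L)
    (LinearMap.toContinuousLinearMap M) p

end LinearFields

section SkewMatrices

variable {R n : Type*} [CommRing R]

/-- The generator `E_{ij} - E_{ji}` of `𝔰𝔬(n)`. -/
def skewSingle [DecidableEq n] (i j : n) : Matrix n n R :=
  Matrix.single i j 1 - Matrix.single j i 1

theorem neg_skewSingle [DecidableEq n] (i j : n) :
    -(skewSingle i j : Matrix n n R) = skewSingle j i :=
  neg_sub _ _

variable [Fintype n]

theorem skewSingle_mem_so [DecidableEq n] (i j : n) :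
    skewSingle i j ∈ LieAlgebra.Orthogonal.so n R := by
  simp only [LieAlgebra.Orthogonal.mem_so, skewSingle, Matrix.transpose_sub,
    Matrix.transpose_single, neg_sub]

theorem two_smul_eq_sum_skewSingle [DecidableEq n] {A : Matrix n n R}
    (hA : A ∈ LieAlgebra.Orthogonal.so n R) :
    (2 : R) • A = ∑ i, ∑ j, A i j • skewSingle i j := by
  rw [LieAlgebra.Orthogonal.mem_so] at hA
  calc (2 : R) • A = A - A.transpose := by rw [hA, sub_neg_eq_add, two_smul]
    _ = ∑ i, ∑ j, A i j • skewSingle i j := by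
      conv_lhs => rw [Matrix.matrix_eq_sum_single A]
      simp [Matrix.transpose_sum, skewSingle, smul_sub]

theorem so_le_of_skewSingle_mem [LinearOrder n] [Invertible (2 : R)]
    {T : Submodule R (Matrix n n R)} (hT : ∀ i j : n, i < j → skewSingle i j ∈ T) :
    (LieAlgebra.Orthogonal.so n R).toSubmodule ≤ T := by
  intro A hA
  have hgen (i j : n) : skewSingle i j ∈ T := by
    rcases lt_trichotomy i j with hij | rfl | hji
    · exact hT i j hij
    · simp [skewSingle]
    · exact neg_skewSingle (R := R) j i ▸ T.neg_mem (hT j i hji)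
  rw [← invOf_smul_smul (2 : R) A, two_smul_eq_sum_skewSingle hA]
  exact T.smul_mem _ (T.sum_mem fun i _ => T.sum_mem fun j _ => T.smul_mem _ (hgen i j))

end SkewMatrices

/-- An element `(S, s)` of the affine Lie algebra `𝔤𝔩(n) ⋉ Rⁿ`. -/
abbrev AffineSymbol (R n : Type*) := Matrix n n R × (n → R)

namespace AffineSymbol

variable {R m n k : Type*} [CommRing R]

/-- The direct sum of `𝔤𝔩(m) ⋉ Rᵐ` and `𝔤𝔩(n) ⋉ Rⁿ`, embedded into `𝔤𝔩(k) ⋉ Rᵏ` by block diagonal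
matrices, for an index type `k` identified with `m ⊕ n`. -/
def blockSum (e : m ⊕ n ≃ k) : AffineSymbol R m × AffineSymbol R n →ₗ[R] AffineSymbol R k where
  toFun x := ((Matrix.fromBlocks x.1.1 0 0 x.2.1).submatrix e.symm e.symm,
    Sum.elim x.1.2 x.2.2 ∘ e.symm)
  map_add' x y := by
    ext i j
    · cases hi : e.symm i <;> cases hj : e.symm j <;> simp [hi, hj]
    · cases hi : e.symm i <;> simp [hi]
  map_smul' c x := by
    ext i j
    · cases hi : e.symm i <;> cases hj : e.symm j <;> simp [hi, hj]
    · cases hi : e.symm i <;> simp [hi]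

theorem blockSum_skewSingle_left [DecidableEq m] [DecidableEq k] (e : m ⊕ n ≃ k) (i j : m) :
    blockSum (R := R) e ((skewSingle i j, 0), 0) =
      (skewSingle (e (Sum.inl i)) (e (Sum.inl j)), 0) := by
  ext a b
  · rcases e.surjective a with ⟨a | a, rfl⟩ <;> rcases e.surjective b with ⟨b | b, rfl⟩ <;>
      simp [blockSum, skewSingle, Matrix.single_apply]
  · simp [blockSum]

theorem blockSum_skewSingle_right [DecidableEq n] [DecidableEq k] (e : m ⊕ n ≃ k) (i j : n) :
    blockSum (R := R) e (0, (skewSingle i j, 0)) =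
      (skewSingle (e (Sum.inr i)) (e (Sum.inr j)), 0) := by
  ext a b
  · rcases e.surjective a with ⟨a | a, rfl⟩ <;> rcases e.surjective b with ⟨b | b, rfl⟩ <;>
      simp [blockSum, skewSingle, Matrix.single_apply]
  · simp [blockSum]

theorem blockSum_single_left [DecidableEq m] [DecidableEq k] (e : m ⊕ n ≃ k) (i : m) :
    blockSum (R := R) e ((0, Pi.single i 1), 0) = (0, Pi.single (e (Sum.inl i)) 1) := by
  ext a b
  · simp [blockSum]
  · rcases e.surjective a with ⟨a | a, rfl⟩ <;> simp [blockSum, Pi.single_apply]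

theorem blockSum_single_right [DecidableEq n] [DecidableEq k] (e : m ⊕ n ≃ k) (i : n) :
    blockSum (R := R) e (0, (0, Pi.single i 1)) = (0, Pi.single (e (Sum.inr i)) 1) := by
  ext a b
  · simp [blockSum]
  · rcases e.surjective a with ⟨a | a, rfl⟩ <;> simp [blockSum, Pi.single_apply]

theorem blockSum_smul_skewSingle [DecidableEq m] [DecidableEq n] [DecidableEq k]
    (e : m ⊕ n ≃ k) (c d : R) (i j l : m) (i' j' : n) :
    blockSum (R := R) e ((c • skewSingle i j, Pi.single l 1), (d • skewSingle i' j', 0)) =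
      (c • skewSingle (e (Sum.inl i)) (e (Sum.inl j)) +
        d • skewSingle (e (Sum.inr i')) (e (Sum.inr j')), Pi.single (e (Sum.inl l)) 1) := by
  calc blockSum (R := R) e ((c • skewSingle i j, Pi.single l 1), (d • skewSingle i' j', 0))
      = blockSum e (c • ((skewSingle i j, 0), 0) + d • (0, (skewSingle i' j', 0)) +
          ((0, Pi.single l 1), 0)) := by simp
    _ = _ := by
      rw [map_add, map_add, map_smul, map_smul, blockSum_skewSingle_left,
        blockSum_skewSingle_right, blockSum_single_left]
      simp

section Bracket

variable [Fintype m] [Fintype n] [Fintype k]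

/-- The Lie bracket of `𝔤𝔩(n) ⋉ Rⁿ`. It is not a `Bracket` instance because the product type
already carries the componentwise one. -/
def bracket (g h : AffineSymbol R n) : AffineSymbol R n :=
  (g.1 * h.1 - h.1 * g.1, g.1.mulVec h.2 - h.1.mulVec g.2)

theorem bracket_blockSum (e : m ⊕ n ≃ k) (x y : AffineSymbol R m × AffineSymbol R n) :
    (blockSum e x).bracket (blockSum e y) = blockSum e (x.1.bracket y.1, x.2.bracket y.2) := by
  refine Prod.ext ?_ ?_
  · ext i j
    cases hi : e.symm i <;> cases hj : e.symm j <;>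
      simp [hi, hj, bracket, blockSum, Matrix.fromBlocks_multiply]
  · ext i
    cases h : e.symm i <;>
      simp [h, bracket, blockSum, Matrix.submatrix_mulVec_equiv, Matrix.fromBlocks_mulVec,
        Function.comp_assoc]

end Bracket

section Euclidean

variable (R n) in
/-- The Lie algebra `𝔰𝔢(n) = 𝔰𝔬(n) ⋉ Rⁿ` of rigid motions. -/
def euclidean [Fintype n] [DecidableEq n] : Submodule R (AffineSymbol R n) :=
  (LieAlgebra.Orthogonal.so n R).toSubmodule.prod ⊤

variable [Fintype n]

theorem mem_euclidean [DecidableEq n] {g : AffineSymbol R n} :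
    g ∈ euclidean R n ↔ g.1 ∈ LieAlgebra.Orthogonal.so n R := by
  simp [euclidean, Submodule.mem_prod]

theorem bracket_mem_euclidean [DecidableEq n] {g h : AffineSymbol R n} (hg : g ∈ euclidean R n)
    (hh : h ∈ euclidean R n) : g.bracket h ∈ euclidean R n := by
  rw [mem_euclidean] at hg hh ⊢
  exact LieSubalgebra.lie_mem _ hg hh

theorem euclidean_le_of_generators_mem [LinearOrder n] [Invertible (2 : R)]
    {T : Submodule R (AffineSymbol R n)} (hrot : ∀ i j : n, i < j → (skewSingle i j, 0) ∈ T)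
    (htrans : ∀ i : n, (0, Pi.single i 1) ∈ T) : euclidean R n ≤ T := by
  refine (Submodule.prod_le_iff _ _ _).mpr ⟨?_, ?_⟩
  · exact Submodule.map_le_iff_le_comap.mpr (so_le_of_skewSingle_mem hrot)
  · rw [← (Pi.basisFun R n).span_eq, Submodule.map_span_le]
    rintro _ ⟨i, rfl⟩
    simpa using htrans i

theorem euclidean_fin_three_le [Invertible (2 : R)] {T : Submodule R (AffineSymbol R (Fin 3))}
    (h₀₁ : (skewSingle 0 1, 0) ∈ T) (h₀₂ : (skewSingle 0 2, 0) ∈ T) (h₁₂ : (skewSingle 1 2, 0) ∈ T)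
    (h₀ : (0, Pi.single 0 1) ∈ T) (h₁ : (0, Pi.single 1 1) ∈ T) (h₂ : (0, Pi.single 2 1) ∈ T) :
    euclidean R (Fin 3) ≤ T := by
  refine euclidean_le_of_generators_mem (fun i j hij => ?_) fun i => ?_
  · fin_cases i <;> fin_cases j <;> first | assumption | exact absurd hij (by decide)
  · fin_cases i <;> assumption

end Euclidean

end AffineSymbol

section LeftInvariantFields

variable {m n : Type*} [Fintype m] [Fintype n]

/-- The left-invariant field `(C, r, x, A) ↦ (C S, C s, A u, A N)` with symbol
`((S, s), (N, u))`. -/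
def leftInvariantField : AffineSymbol ℝ m × AffineSymbol ℝ n →ₗ[ℝ]
    Module.End ℝ ((Matrix m m ℝ × EuclideanSpace ℝ m) × EuclideanSpace ℝ n × Matrix n n ℝ) :=
  LinearMap.mk₂ ℝ
    (fun g p => ((p.1.1 * g.1.1, WithLp.toLp 2 (p.1.1.mulVec g.1.2)),
      WithLp.toLp 2 (p.2.2.mulVec g.2.2), p.2.2 * g.2.1))
    (fun g h p => by simp [mul_add, Matrix.mulVec_add])
    (fun c g p => by simp [Matrix.mulVec_smul])
    (fun g p q => by simp [add_mul, Matrix.add_mulVec])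
    (fun c g p => by simp [Matrix.smul_mulVec])

theorem lieBr_leftInvariantField (g h : AffineSymbol ℝ m × AffineSymbol ℝ n)
    (p : (Matrix m m ℝ × EuclideanSpace ℝ m) × EuclideanSpace ℝ n × Matrix n n ℝ) :
    lieBr (leftInvariantField g) (leftInvariantField h) p =
      leftInvariantField (g.1.bracket h.1, g.2.bracket h.2) p := by
  rw [lieBr_linearMap]
  simp [leftInvariantField, AffineSymbol.bracket, Ring.lie_def, mul_sub, mul_assoc,
    Matrix.mulVec_sub]

end LeftInvariantFields

section Rolling

open AffineSymbol

/-- The field `(C, r, x, A) ↦ (C S, C s, A (a, s), A diag(P, S))` with symbol `((P, a), (S, s))`. -/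
def rollingField : AffineSymbol ℝ (Fin 3) × AffineSymbol ℝ (Fin 3) →ₗ[ℝ] Module.End ℝ ConfSE :=
  leftInvariantField ∘ₗ (LinearMap.snd ℝ _ _).prod (blockSum (k := Fin 6) finSumFinEquiv)

theorem rollingField_apply (x : AffineSymbol ℝ (Fin 3) × AffineSymbol ℝ (Fin 3)) (p : ConfSE) :
    rollingField x p =
      ((p.1.1 * x.2.1, WithLp.toLp 2 (p.1.1.mulVec x.2.2)),
        WithLp.toLp 2 (p.2.2.mulVec (blockSum (k := Fin 6) finSumFinEquiv x).2),
        p.2.2 * (blockSum (k := Fin 6) finSumFinEquiv x).1) :=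
  rfl

theorem lieBr_rollingField (x y : AffineSymbol ℝ (Fin 3) × AffineSymbol ℝ (Fin 3)) (p : ConfSE) :
    lieBr (rollingField x) (rollingField y) p =
      rollingField (x.1.bracket y.1, x.2.bracket y.2) p := by
  refine (lieBr_leftInvariantField _ _ p).trans ?_
  simp only [LinearMap.prod_apply, Function.prod, LinearMap.snd_apply, bracket_blockSum]
  rfl

/-- The symbols of the twelve fields `seFields`, in the same order. -/
def seSymbol : Fin 12 → AffineSymbol ℝ (Fin 3) × AffineSymbol ℝ (Fin 3) :=
  ![(((2 * √2)⁻¹ • skewSingle 1 2, Pi.single 0 1), ((√2)⁻¹ • skewSingle 0 1, 0)),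
    ((-(2 * √2)⁻¹ • skewSingle 0 2, Pi.single 1 1), ((√2)⁻¹ • skewSingle 0 2, 0)),
    (((2 * √2)⁻¹ • skewSingle 0 1, Pi.single 2 1), ((√2)⁻¹ • skewSingle 1 2, 0)),
    (0, (0, Pi.single 0 1)),
    (0, (0, Pi.single 1 1)),
    (0, (0, Pi.single 2 1)),
    ((skewSingle 0 1, 0), 0),
    ((skewSingle 0 2, 0), 0),
    ((skewSingle 1 2, 0), 0),
    ((0, Pi.single 0 1), 0),
    ((0, Pi.single 1 1), 0),
    ((0, Pi.single 2 1), 0)]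

theorem blockSum_seSymbol (i : Fin 12) :
    blockSum (k := Fin 6) finSumFinEquiv (seSymbol i) =
      ![(Mse1, Pi.single 0 1), (Mse2, Pi.single 1 1), (Mse3, Pi.single 2 1),
        (0, Pi.single 3 1), (0, Pi.single 4 1), (0, Pi.single 5 1),
        (E6 0 1 - E6 1 0, 0), (E6 0 2 - E6 2 0, 0), (E6 1 2 - E6 2 1, 0),
        (0, Pi.single 0 1), (0, Pi.single 1 1), (0, Pi.single 2 1)] i := by
  fin_cases i
  exacts [blockSum_smul_skewSingle _ _ _ 1 2 0 0 1, blockSum_smul_skewSingle _ _ _ 0 2 1 0 2,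
    blockSum_smul_skewSingle _ _ _ 0 1 2 1 2, blockSum_single_right _ 0,
    blockSum_single_right _ 1, blockSum_single_right _ 2, blockSum_skewSingle_left _ 0 1,
    blockSum_skewSingle_left _ 0 2, blockSum_skewSingle_left _ 1 2, blockSum_single_left _ 0,
    blockSum_single_left _ 1, blockSum_single_left _ 2]

theorem seFields_eq_rollingField (i : Fin 12) : seFields i = rollingField (seSymbol i) := by
  funext p
  rw [rollingField_apply, blockSum_seSymbol]
  fin_cases i <;>
    simp [seFields, seSymbol, Yse1, Yse2, Yse3, Xse, E3, skewSingle, Prod.zero_eq_mk]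

theorem seSymbol_mem_euclidean_prod (i : Fin 12) :
    seSymbol i ∈ (euclidean ℝ (Fin 3)).prod (euclidean ℝ (Fin 3)) := by
  rw [Submodule.mem_prod, mem_euclidean, mem_euclidean]
  fin_cases i <;> constructor <;>
    first
    | exact zero_mem _
    | exact skewSingle_mem_so _ _
    | exact (LieAlgebra.Orthogonal.so (Fin 3) ℝ).smul_mem _ (skewSingle_mem_so _ _)

theorem euclidean_prod_le_span_seSymbol :
    (euclidean ℝ (Fin 3)).prod (euclidean ℝ (Fin 3)) ≤
      Submodule.span ℝ (Set.range seSymbol) := by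
  have hmem (k : Fin 12) : seSymbol k ∈ Submodule.span ℝ (Set.range seSymbol) :=
    Submodule.subset_span ⟨k, rfl⟩
  have hleft : (euclidean ℝ (Fin 3)).map (LinearMap.inl ℝ _ _) ≤
      Submodule.span ℝ (Set.range seSymbol) :=
    Submodule.map_le_iff_le_comap.mpr <|
      euclidean_fin_three_le (hmem 6) (hmem 7) (hmem 8) (hmem 9) (hmem 10) (hmem 11)
  have hsnd (k : Fin 12) : (0, (seSymbol k).2) ∈ Submodule.span ℝ (Set.range seSymbol) := by
    have hfst := hleft (Submodule.mem_map_of_mem (seSymbol_mem_euclidean_prod k).1)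
    have hsub : seSymbol k - ((seSymbol k).1, 0) = (0, (seSymbol k).2) :=
      Prod.ext (sub_self _) (sub_zero _)
    exact hsub ▸ sub_mem (hmem k) hfst
  have hrot {i j : Fin 3} (h : (0, ((√2)⁻¹ • skewSingle i j, 0)) ∈
      Submodule.span ℝ (Set.range seSymbol)) :
      (0, (skewSingle i j, 0)) ∈ Submodule.span ℝ (Set.range seSymbol) := by
    rw [← Submodule.smul_mem_iff _ (inv_ne_zero (show √2 ≠ 0 by positivity))]
    simpa using h
  exact (Submodule.prod_le_iff _ _ _).mpr ⟨hleft, Submodule.map_le_iff_le_comap.mpr <|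
    euclidean_fin_three_le (hrot (hsnd 0)) (hrot (hsnd 1)) (hrot (hsnd 2))
      (hsnd 3) (hsnd 4) (hsnd 5)⟩

end Rolling

/-- For any two of the twelve fields `Z₁, Z₂, Z₃, K₁, K₂, K₃, V₁₂, V₁₃, V₂₃, U₁, U₂, U₃` and
every point `p ∈ Ω`, the Lie bracket `[V, W](p)` lies in the span of the twelve vectors at `p`
(so the flag of the rolling distribution of `SE(3)` over `𝔰𝔢(3)` stabilizes: `D⁴ = D³`, the
`27`-dimensional configuration space is foliated by `12`-dimensional orbits, and the rolling is
not controllable). -/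
theorem statement13 (i j : Fin 12) (p : ConfSE) :
    lieBr (seFields i) (seFields j) p
      ∈ Submodule.span ℝ (Set.range fun k : Fin 12 => seFields k p) := by
  have hbracket : ((seSymbol i).1.bracket (seSymbol j).1, (seSymbol i).2.bracket (seSymbol j).2) ∈
      Submodule.span ℝ (Set.range seSymbol) :=
    euclidean_prod_le_span_seSymbol <| Submodule.mem_prod.mpr
      ⟨AffineSymbol.bracket_mem_euclidean (seSymbol_mem_euclidean_prod i).1
          (seSymbol_mem_euclidean_prod j).1,
        AffineSymbol.bracket_mem_euclidean (seSymbol_mem_euclidean_prod i).2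
          (seSymbol_mem_euclidean_prod j).2⟩
  have heval := Submodule.mem_map_of_mem (f := rollingField.flip p) hbracket
  rw [Submodule.map_span, ← Set.range_comp] at heval
  simp only [seFields_eq_rollingField, lieBr_rollingField]
  exact heval
end
end

section
/- Let θ : ℝ → ℝ be differentiable with θ(0) = 0, and let N = (1/2)(E₂₃ − E₃₂) + (E₄₅ − E₅₄) ∈ M₆(ℝ). Define A : ℝ → M₆(ℝ) by: A(t)₁₁ = A(t)₆₆ = 1; A(t)₂₂ = A(t)₃₃ = cos(θ(t)/2), A(t)₂₃ = sin(θ(t)/2), A(t)₃₂ = −sin(θ(t)/2); A(t)₄₄ = A(t)₅₅ = cos θ(t), A(t)₄₅ = sin θ(t), A(t)₅₄ = −sin θ(t); and all other entries 0. Then A(0) is the identity matrix, A(t) ∈ SO(6) for every t, and A satisfies the matrix differential equation A′(t) = θ′(t) · A(t) N for all t. -/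
open Matrix

noncomputable section

attribute [local instance] Matrix.normedAddCommGroup Matrix.normedSpace

/-- `N = (1/2)(E₂₃ − E₃₂) + (E₄₅ − E₅₄)`. -/
def Nmat : Matrix (Fin 6) (Fin 6) ℝ :=
  (1 / 2 : ℝ) • (E6 1 2 - E6 2 1) + (E6 3 4 - E6 4 3)

/-- The `SO(6)`-component `A(t)` of the intrinsic rolling of `SE(3)` over `𝔰𝔢(3)` along the
curve of rotation through angle `θ(t)` about the `x₃`-axis and translation along it. -/
def Amat (θ : ℝ → ℝ) (t : ℝ) : Matrix (Fin 6) (Fin 6) ℝ :=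
  !![1, 0, 0, 0, 0, 0;
     0, Real.cos (θ t / 2), Real.sin (θ t / 2), 0, 0, 0;
     0, -Real.sin (θ t / 2), Real.cos (θ t / 2), 0, 0, 0;
     0, 0, 0, Real.cos (θ t), Real.sin (θ t), 0;
     0, 0, 0, -Real.sin (θ t), Real.cos (θ t), 0;
     0, 0, 0, 0, 0, 1]

/-!
`A(t)` is `exp (θ(t) N)`, where `N = ½ K + L` and `K`, `L` generate the rotations of two
disjoint coordinate planes. Since `K ^ 3 = -K`, the exponential is given by Rodrigues' formula
`R K x = 1 + sin x • K + (1 - cos x) • K ^ 2`, so that `A(t) = R K (θ(t) / 2) * R L (θ(t))`.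
As `R K` is a one-parameter group generated by a skew-symmetric matrix, its values are orthogonal;
being squares, `R K x = R K (x / 2) ^ 2`, they have determinant `1`. The differential equation is
the product rule, because `K` and `L` commute.
-/

section Algebra

variable {𝔸 : Type*} [Ring 𝔸] [Algebra ℝ 𝔸]

/-- Rodrigues' expression for `exp (x • K)`, valid when `K ^ 3 = -K`: for a skew-symmetric matrix
`K` it is the rotation through angle `x` generated by `K`. -/
def rodrigues (K : 𝔸) (x : ℝ) : 𝔸 :=
  1 + Real.sin x • K + (1 - Real.cos x) • K ^ 2

lemma rodrigues_zero (K : 𝔸) : rodrigues K 0 = 1 := by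
  simp [rodrigues]

lemma rodrigues_add {K : 𝔸} (hK : K ^ 3 = -K) (x y : ℝ) :
    rodrigues K (x + y) = rodrigues K x * rodrigues K y := by
  have hK₂₁ : K ^ 2 * K = -K := by rw [← pow_succ, hK]
  have hK₁₂ : K * K ^ 2 = -K := by rw [← pow_succ', hK]
  have hK₂₂ : K ^ 2 * K ^ 2 = -K ^ 2 := by rw [← pow_add, pow_succ, hK, neg_mul, ← sq]
  simp only [rodrigues, Real.sin_add, Real.cos_add, add_mul, mul_add, one_mul, mul_one,
    smul_mul_smul_comm, hK₂₁, hK₁₂, hK₂₂, ← sq K]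
  module

lemma rodrigues_mul_self {K : 𝔸} (hK : K ^ 3 = -K) (x : ℝ) :
    rodrigues K x * K = Real.cos x • K + Real.sin x • K ^ 2 := by
  simp only [rodrigues, add_mul, one_mul, smul_mul_assoc, ← sq, ← pow_succ, hK, Nat.reduceAdd]
  module

lemma commute_rodrigues_right {K L : 𝔸} (h : Commute K L) (x : ℝ) : Commute K (rodrigues L x) :=
  ((Commute.one_right K).add_right (h.smul_right _)).add_right ((h.pow_right 2).smul_right _)

variable [StarRing 𝔸] [StarModule ℝ 𝔸]

lemma star_rodrigues {K : 𝔸} (hK : star K = -K) (x : ℝ) :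
    star (rodrigues K x) = rodrigues K (-x) := by
  simp [rodrigues, hK]

lemma rodrigues_mem_unitary {K : 𝔸} (hK_star : star K = -K) (hK : K ^ 3 = -K) (x : ℝ) :
    rodrigues K x ∈ unitary 𝔸 := by
  constructor <;> rw [star_rodrigues hK_star, ← rodrigues_add hK]
  · rw [neg_add_cancel, rodrigues_zero]
  · rw [add_neg_cancel, rodrigues_zero]

end Algebra

section Derivative

variable {𝔸 : Type*} [NormedRing 𝔸] [NormedAlgebra ℝ 𝔸] {u v : ℝ → ℝ} {u' v' t : ℝ}

lemma hasDerivAt_rodrigues {K : 𝔸} (hK : K ^ 3 = -K) (hu : HasDerivAt u u' t) :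
    HasDerivAt (fun s => rodrigues K (u s)) (u' • (rodrigues K (u t) * K)) t := by
  have h_sin := hu.sin.smul_const K
  have h_cos := (hu.cos.const_sub 1).smul_const (K ^ 2)
  refine ((h_sin.const_add 1).add h_cos).congr_deriv ?_
  rw [rodrigues_mul_self hK]
  module

lemma hasDerivAt_rodrigues_mul_rodrigues {K L : 𝔸} (hK : K ^ 3 = -K) (hL : L ^ 3 = -L)
    (hKL : Commute K L) (hu : HasDerivAt u u' t) (hv : HasDerivAt v v' t) :
    HasDerivAt (fun s => rodrigues K (u s) * rodrigues L (v s))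
      (rodrigues K (u t) * rodrigues L (v t) * (u' • K + v' • L)) t := by
  refine ((hasDerivAt_rodrigues hK hu).mul (hasDerivAt_rodrigues hL hv)).congr_deriv ?_
  have hcomm : K * rodrigues L (v t) = rodrigues L (v t) * K :=
    (commute_rodrigues_right hKL (v t)).eq
  simp only [smul_mul_assoc, mul_smul_comm, mul_add, mul_assoc, hcomm]

end Derivative

lemma rodrigues_mem_specialOrthogonalGroup {n : Type*} [Fintype n] [DecidableEq n]
    {K : Matrix n n ℝ} (hK_skew : Kᵀ = -K) (hK : K ^ 3 = -K) (x : ℝ) :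
    rodrigues K x ∈ specialOrthogonalGroup n ℝ := by
  have hK_star : star K = -K := by
    rwa [star_eq_conjTranspose, conjTranspose_eq_transpose_of_trivial]
  have h_orth (y : ℝ) : rodrigues K y ∈ orthogonalGroup n ℝ := rodrigues_mem_unitary hK_star hK y
  refine mem_specialOrthogonalGroup_iff.2 ⟨h_orth x, ?_⟩
  calc (rodrigues K x).det = (rodrigues K (x / 2)).det * (rodrigues K (x / 2)).det := by
        rw [← det_mul, ← rodrigues_add hK, add_halves]
    _ = 1 := (Unitary.mem_iff.1 (det_of_mem_unitary (h_orth (x / 2)))).1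

section PlaneGenerator

variable {n R : Type*} [DecidableEq n] [Ring R] {i j k l : n}

/-- The infinitesimal generator `E_{ij} - E_{ji}` of the rotations of the `(i, j)`-coordinate
plane. The sign is chosen as in `Amat`: the rotation through angle `x` has `sin x`, not `-sin x`,
in position `(i, j)`. -/
def planeGenerator (i j : n) : Matrix n n R :=
  single i j 1 - single j i 1

lemma transpose_planeGenerator (i j : n) :
    (planeGenerator i j : Matrix n n R)ᵀ = -planeGenerator i j := by
  simp [planeGenerator]

variable [Fintype n]

lemma planeGenerator_sq (hij : i ≠ j) :
    (planeGenerator i j : Matrix n n R) ^ 2 = -(single i i 1 + single j j 1) := by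
  simp only [planeGenerator, sq, mul_sub, sub_mul, single_mul_single_same, mul_one,
    single_mul_single_of_ne _ _ _ _ hij, single_mul_single_of_ne _ _ _ _ hij.symm]
  abel

lemma planeGenerator_pow_three (hij : i ≠ j) :
    (planeGenerator i j : Matrix n n R) ^ 3 = -planeGenerator i j := by
  rw [pow_succ, planeGenerator_sq hij]
  simp only [planeGenerator, mul_sub, neg_mul, add_mul, single_mul_single_same, mul_one,
    single_mul_single_of_ne _ _ _ _ hij, single_mul_single_of_ne _ _ _ _ hij.symm]
  abel

lemma commute_planeGenerator (hik : i ≠ k) (hil : i ≠ l) (hjk : j ≠ k) (hjl : j ≠ l) :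
    Commute (planeGenerator i j : Matrix n n R) (planeGenerator k l) := by
  simp [Commute, SemiconjBy, planeGenerator, mul_sub, sub_mul, hik, hil, hjk, hjl, hik.symm,
    hil.symm, hjk.symm, hjl.symm]

end PlaneGenerator

lemma Nmat_eq_planeGenerator :
    Nmat = (1 / 2 : ℝ) • planeGenerator 1 2 + planeGenerator 3 4 :=
  rfl

lemma Amat_eq_rodrigues_mul_rodrigues (θ : ℝ → ℝ) (t : ℝ) :
    Amat θ t =
      rodrigues (planeGenerator 1 2) (θ t / 2) * rodrigues (planeGenerator 3 4) (θ t) := by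
  rw [rodrigues, rodrigues, planeGenerator_sq (by decide), planeGenerator_sq (by decide)]
  ext i j
  fin_cases i <;> fin_cases j <;>
    simp [Amat, planeGenerator, mul_apply, Fin.sum_univ_six, single_apply, one_apply]

lemma Amat_mem_specialOrthogonalGroup (θ : ℝ → ℝ) (t : ℝ) :
    Amat θ t ∈ specialOrthogonalGroup (Fin 6) ℝ := by
  have h_rot {i j : Fin 6} (hij : i ≠ j) (x : ℝ) :
      rodrigues (planeGenerator i j) x ∈ specialOrthogonalGroup (Fin 6) ℝ :=
    rodrigues_mem_specialOrthogonalGroup (transpose_planeGenerator i j)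
      (planeGenerator_pow_three hij) x
  rw [Amat_eq_rodrigues_mul_rodrigues]
  exact mul_mem (h_rot (by decide) _) (h_rot (by decide) _)

lemma hasDerivAt_Amat {θ : ℝ → ℝ} {θ' t : ℝ} (hθ : HasDerivAt θ θ' t) :
    HasDerivAt (Amat θ) (θ' • (Amat θ t * Nmat)) t := by
  -- The product rule needs a submultiplicative norm, which the entrywise sup norm is not;
  -- `HasDerivAt` depends only on the topology, which the two norms share definitionally.
  let _ : NormedRing (Matrix (Fin 6) (Fin 6) ℝ) := Matrix.linftyOpNormedRing
  let _ : NormedAlgebra ℝ (Matrix (Fin 6) (Fin 6) ℝ) := Matrix.linftyOpNormedAlgebra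
  have h_cube {i j : Fin 6} (hij : i ≠ j) :
      (planeGenerator i j : Matrix (Fin 6) (Fin 6) ℝ) ^ 3 = -planeGenerator i j :=
    planeGenerator_pow_three hij
  have h_comm : Commute (planeGenerator 1 2 : Matrix (Fin 6) (Fin 6) ℝ) (planeGenerator 3 4) :=
    commute_planeGenerator (by decide) (by decide) (by decide) (by decide)
  have h_prod := hasDerivAt_rodrigues_mul_rodrigues (h_cube (by decide)) (h_cube (by decide))
    h_comm (hθ.div_const 2) hθ
  have h_gen : (θ' / 2) • planeGenerator 1 2 + θ' • planeGenerator 3 4 = θ' • Nmat := by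
    rw [Nmat_eq_planeGenerator]
    module
  simp only [← Amat_eq_rodrigues_mul_rodrigues, h_gen, mul_smul_comm] at h_prod
  exact h_prod

/-- `A(0)` is the identity, `A(t) ∈ SO(6)` for every `t`, and `A` satisfies the matrix
differential equation `A′(t) = θ′(t) · A(t) N`. -/
theorem statement15 (θ : ℝ → ℝ) (hθ : Differentiable ℝ θ) (hθ0 : θ 0 = 0) :
    Amat θ 0 = 1 ∧
    (∀ t, (Amat θ t)ᵀ * Amat θ t = 1 ∧ (Amat θ t).det = 1) ∧
    (∀ t, HasDerivAt (Amat θ) (deriv θ t • (Amat θ t * Nmat)) t) := by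
  refine ⟨?_, fun t => ?_, fun t => hasDerivAt_Amat (hθ t).hasDerivAt⟩
  · rw [Amat_eq_rodrigues_mul_rodrigues, hθ0, zero_div, rodrigues_zero, rodrigues_zero, one_mul]
  · obtain ⟨h_orth, h_det⟩ :=
      mem_specialOrthogonalGroup_iff.1 (Amat_mem_specialOrthogonalGroup θ t)
    exact ⟨(mem_orthogonalGroup_iff' _ _).1 h_orth, h_det⟩
end
end
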